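/- Let d ≥ 2 and k ≥ 1 be integers, r₀ > 0, and let Q : ℝ^d → ℝ be a nonzero solid harmonic of degree k. For each ε > 0 let u_ε(x) := A_ε|x|^{2−d−2k}Q(x) + B_ε Q(x), where A_ε := 1/((r₀+ε)^{2−d−2k} − r₀^{2−d−2k}) and B_ε := −r₀^{2−d−2k} A_ε. Then there exist constants ε₀ > 0 and 0 < c₁ ≤ c₂, depending only on d, k, r₀ and Q, such that for every ε ∈ (0, ε₀): c₁/ε ≤ sup_{r₀ < |x| < r₀+ε} |∇u_ε(x)| ≤ c₂/ε. -/

import Mathlib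

open MeasureTheory Metric Set
open scoped InnerProductSpace

/-- The Laplacian of `f : ℝ^d → ℝ` at `x`, as the sum of the pure second
partial derivatives in the coordinate directions. -/
noncomputable def laplacian {d : ℕ} (f : EuclideanSpace ℝ (Fin d) → ℝ)
    (x : EuclideanSpace ℝ (Fin d)) : ℝ :=
  ∑ i : Fin d,
    iteratedFDeriv ℝ 2 f x ![EuclideanSpace.single i 1, EuclideanSpace.single i 1]

/-- `f` is harmonic on the open set `U ⊆ ℝ^d`: it is `C²` there and its
Laplacian vanishes on `U`. -/
def HarmonicOnSet {d : ℕ} (f : EuclideanSpace ℝ (Fin d) → ℝ)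
    (U : Set (EuclideanSpace ℝ (Fin d))) : Prop :=
  ContDiffOn ℝ 2 f U ∧ ∀ x ∈ U, laplacian f x = 0

/-- `Q : ℝ^d → ℝ` is a solid harmonic of degree `k`: a polynomial, homogeneous of
degree `k`, which is harmonic on all of `ℝ^d`. -/
def IsSolidHarmonic {d : ℕ} (k : ℕ) (Q : EuclideanSpace ℝ (Fin d) → ℝ) : Prop :=
  (∃ P : MvPolynomial (Fin d) ℝ, P.IsHomogeneous k ∧
    ∀ x : EuclideanSpace ℝ (Fin d), Q x = MvPolynomial.eval (fun i => x i) P) ∧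
  ∀ x : EuclideanSpace ℝ (Fin d), laplacian Q x = 0

/-!
The potential is `u_ε = D(ε)⁻¹ ψ`, where `D(ε) = (r₀ + ε)^s - r₀^s` with `s = 2 - d - 2k ≠ 0`, and
`ψ(x) = (‖x‖^s - r₀^s) Q(x)` does not depend on `ε`. Since `D(ε)` is of exact order `ε` and `∇ψ` is
bounded near the inner sphere, `‖∇u_ε‖ = O(1 / ε)`. Conversely, choose a unit vector `v` with
`Q(r₀ v) ≠ 0`. Along this ray `u_ε` goes from `0` to `Q((r₀ + ε) v) ≈ Q(r₀ v)` over a distance `ε`,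
so by the mean value theorem its gradient is somewhere at least of order `1 / ε`.
-/

open Filter
open scoped Topology

theorem norm_gradient {𝕜 F : Type*} [RCLike 𝕜] [NormedAddCommGroup F] [InnerProductSpace 𝕜 F]
    [CompleteSpace F] (f : F → 𝕜) (x : F) : ‖gradient f x‖ = ‖fderiv 𝕜 f x‖ := by
  simp [gradient]

theorem exists_eventually_nhdsSet_norm_le {X F : Type*} [TopologicalSpace X]
    [SeminormedAddCommGroup F] {K : Set X} (hK : IsCompact K) {f : X → F}
    (hf : ∀ x ∈ K, ContinuousAt f x) : ∃ M, ∀ᶠ x in 𝓝ˢ K, ‖f x‖ ≤ M := by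
  obtain ⟨C, hC⟩ := hK.exists_bound_of_continuousOn fun x hx => (hf x hx).continuousWithinAt
  refine ⟨C + 1, eventually_nhdsSet_iff_forall.2 fun x hx => ?_⟩
  exact (hf x hx).norm.eventually_le_const ((hC x hx).trans_lt (lt_add_one C))

theorem exists_eventually_mul_le_norm_sub {F : Type*} [NormedAddCommGroup F] [NormedSpace ℝ F]
    {φ : ℝ → F} {r : ℝ} (hφ : deriv φ r ≠ 0) :
    ∃ c > 0, ∀ᶠ ε in 𝓝[>] (0 : ℝ), c * ε ≤ ‖φ (r + ε) - φ r‖ := by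
  have hslope := (differentiableAt_of_deriv_ne_zero hφ).hasDerivAt.tendsto_slope_zero_right.norm
  have hpos : 0 < ‖deriv φ r‖ := norm_pos_iff.2 hφ
  refine ⟨‖deriv φ r‖ / 2, half_pos hpos, ?_⟩
  filter_upwards [hslope.eventually_const_le (half_lt_self hpos), self_mem_nhdsWithin]
    with ε hε (hε_pos : 0 < ε)
  rwa [norm_smul, norm_inv, Real.norm_of_nonneg hε_pos.le, ← div_eq_inv_mul,
    le_div_iff₀ hε_pos] at hε

section NormedSpace

variable {E : Type*} [NormedAddCommGroup E] [NormedSpace ℝ E]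

theorem exists_fderiv_smul_apply_eq_slope {f : E → ℝ} {v : E} {a b : ℝ} (hab : a < b)
    (hf : ∀ t ∈ Icc a b, DifferentiableAt ℝ f (t • v)) :
    ∃ t ∈ Ioo a b, fderiv ℝ f (t • v) v = (f (b • v) - f (a • v)) / (b - a) := by
  have hderiv : ∀ t ∈ Icc a b,
      HasDerivAt (fun t : ℝ => f (t • v)) (fderiv ℝ f (t • v) v) t := fun t ht =>
    (hf t ht).hasFDerivAt.comp_hasDerivAt t (by simpa using (hasDerivAt_id t).smul_const v)
  exact exists_hasDerivAt_eq_slope _ _ hab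
    (fun t ht => (hderiv t ht).continuousAt.continuousWithinAt)
    (fun t ht => hderiv t (Ioo_subset_Icc_self ht))

theorem eventually_half_abs_le_abs_add_smul {f : E → ℝ} {r : ℝ} {v : E}
    (hf : ContinuousAt f (r • v)) (hne : f (r • v) ≠ 0) :
    ∀ᶠ ε in 𝓝 (0 : ℝ), |f (r • v)| / 2 ≤ |f ((r + ε) • v)| := by
  have hcont : ContinuousAt (fun ε : ℝ => |f ((r + ε) • v)|) 0 :=
    (ContinuousAt.comp (f := fun ε : ℝ => (r + ε) • v) (by simpa using hf) (by fun_prop)).abs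
  refine hcont.eventually_const_le ?_
  simpa using half_lt_self (abs_pos.2 hne)

theorem norm_div_norm_smul_self {x : E} (hx : x ≠ 0) {r : ℝ} (hr : 0 ≤ r) :
    ‖(r / ‖x‖) • x‖ = r := by
  rw [norm_smul, norm_div, norm_norm, Real.norm_of_nonneg hr,
    div_mul_cancel₀ _ (norm_ne_zero_iff.2 hx)]

theorem exists_norm_eq_and_ne_zero_of_map_smul {f : E → ℝ} {k : ℕ} (hk : k ≠ 0)
    (hf : ∀ (t : ℝ) x, f (t • x) = t ^ k * f x) (hne : f ≠ 0) {r : ℝ} (hr : 0 < r) :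
    ∃ x, ‖x‖ = r ∧ f x ≠ 0 := by
  obtain ⟨y, hy⟩ : ∃ y, f y ≠ 0 := Function.ne_iff.1 hne
  have hf_zero : f 0 = 0 := by simpa [hk] using hf 0 0
  have hy_ne : y ≠ 0 := fun h => hy (h ▸ hf_zero)
  refine ⟨(r / ‖y‖) • y, norm_div_norm_smul_self hy_ne hr.le, ?_⟩
  rw [hf]
  positivity

theorem dist_div_norm_smul_self {x : E} (hx : x ≠ 0) (r : ℝ) :
    dist x ((r / ‖x‖) • x) = |‖x‖ - r| := by
  have hx_norm : ‖x‖ ≠ 0 := norm_ne_zero_iff.2 hx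
  calc dist x ((r / ‖x‖) • x) = ‖(1 - r / ‖x‖) • x‖ := by rw [dist_eq_norm, sub_smul, one_smul]
    _ = |(1 - r / ‖x‖) * ‖x‖| := by rw [norm_smul, Real.norm_eq_abs, abs_mul, abs_norm]
    _ = |‖x‖ - r| := by rw [sub_mul, one_mul, div_mul_cancel₀ _ hx_norm]

variable [ProperSpace E]

theorem eventually_forall_shell_of_nhdsSet_sphere {r : ℝ} (hr : 0 < r) {p : E → Prop}
    (hp : ∀ᶠ x in 𝓝ˢ (sphere (0 : E) r), p x) :
    ∀ᶠ ε in 𝓝 (0 : ℝ), ∀ x : E, r ≤ ‖x‖ → ‖x‖ ≤ r + ε → p x := by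
  obtain ⟨δ, hδ, hδp⟩ := (hasBasis_nhdsSet_thickening (isCompact_sphere (0 : E) r)).mem_iff.1 hp
  filter_upwards [gt_mem_nhds hδ] with ε hε x hrx hxε
  have hx : x ≠ 0 := norm_pos_iff.1 (hr.trans_le hrx)
  refine hδp (mem_thickening_iff.2 ⟨(r / ‖x‖) • x, ?_, ?_⟩)
  · exact mem_sphere_zero_iff_norm.2 (norm_div_norm_smul_self hx hr.le)
  · rw [dist_div_norm_smul_self hx, abs_of_nonneg (sub_nonneg.2 hrx)]
    linarith

theorem exists_eventually_forall_shell_norm_fderiv_le {F : Type*} [NormedAddCommGroup F]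
    [NormedSpace ℝ F] {f : E → F} {r : ℝ} (hr : 0 < r)
    (hf : ∀ x ∈ sphere (0 : E) r, ContDiffAt ℝ 1 f x) :
    ∃ M, ∀ᶠ ε in 𝓝 (0 : ℝ), ∀ x : E, r ≤ ‖x‖ → ‖x‖ ≤ r + ε →
      DifferentiableAt ℝ f x ∧ ‖fderiv ℝ f x‖ ≤ M := by
  obtain ⟨M, hM⟩ := exists_eventually_nhdsSet_norm_le (isCompact_sphere (0 : E) r)
    fun x hx => (hf x hx).continuousAt_fderiv one_ne_zero
  have hdiff : ∀ᶠ x in 𝓝ˢ (sphere (0 : E) r), DifferentiableAt ℝ f x :=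
    eventually_nhdsSet_iff_forall.2 fun x hx =>
      ((hf x hx).eventually (by simp)).mono fun y hy => hy.differentiableAt one_ne_zero
  exact ⟨M, eventually_forall_shell_of_nhdsSet_sphere hr (hdiff.and hM)⟩

end NormedSpace

section ShellPotential

variable {E : Type*} [NormedAddCommGroup E]

/-- The potential in the shell `r < ‖x‖ < r + ε` obtained by modulating `Q` with the affine
function of the radial profile `φ ‖x‖` that is `0` on the inner and `1` on the outer sphere. -/
noncomputable def shellPotential (φ : ℝ → ℝ) (r : ℝ) (Q : E → ℝ) (ε : ℝ) (x : E) : ℝ :=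
  (φ (r + ε) - φ r)⁻¹ * ((φ ‖x‖ - φ r) * Q x)

variable {φ : ℝ → ℝ} {r ε : ℝ} {Q : E → ℝ} {x : E}

theorem shellPotential_of_norm_eq_inner (hx : ‖x‖ = r) : shellPotential φ r Q ε x = 0 := by
  simp [shellPotential, hx]

theorem shellPotential_of_norm_eq_outer (hφ : φ (r + ε) - φ r ≠ 0) (hx : ‖x‖ = r + ε) :
    shellPotential φ r Q ε x = Q x := by
  rw [shellPotential, hx, inv_mul_cancel_left₀ hφ]

variable [InnerProductSpace ℝ E] [ProperSpace E]

theorem exists_eventually_norm_fderiv_shellPotential_le (hr : 0 < r) (hφ : ContDiffAt ℝ 1 φ r)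
    (hφ' : deriv φ r ≠ 0) (hQ : ∀ x ∈ sphere (0 : E) r, ContDiffAt ℝ 1 Q x) :
    ∃ C, ∀ᶠ ε in 𝓝[>] (0 : ℝ), ∀ x : E, r ≤ ‖x‖ → ‖x‖ ≤ r + ε →
      DifferentiableAt ℝ (shellPotential φ r Q ε) x ∧
        ‖fderiv ℝ (shellPotential φ r Q ε) x‖ ≤ C / ε := by
  have hψ : ∀ x ∈ sphere (0 : E) r, ContDiffAt ℝ 1 (fun x => (φ ‖x‖ - φ r) * Q x) x := by
    intro x hx
    have hx_norm : ‖x‖ = r := mem_sphere_zero_iff_norm.1 hx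
    have hx_ne : x ≠ 0 := norm_pos_iff.1 (hx_norm ▸ hr)
    exact (((hx_norm ▸ hφ).comp x (contDiffAt_norm ℝ hx_ne)).sub contDiffAt_const).mul (hQ x hx)
  obtain ⟨M, hM⟩ := exists_eventually_forall_shell_norm_fderiv_le hr hψ
  obtain ⟨c, hc, hcφ⟩ := exists_eventually_mul_le_norm_sub hφ'
  refine ⟨M / c, ?_⟩
  filter_upwards [hM.filter_mono nhdsWithin_le_nhds, hcφ, self_mem_nhdsWithin]
    with ε hMε hcε (hε : 0 < ε) x hrx hxε
  obtain ⟨hdiff, hbound⟩ := hMε x hrx hxε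
  refine ⟨hdiff.const_mul _, ?_⟩
  calc ‖fderiv ℝ (shellPotential φ r Q ε) x‖
      = ‖φ (r + ε) - φ r‖⁻¹ * ‖fderiv ℝ (fun x => (φ ‖x‖ - φ r) * Q x) x‖ := by
        rw [← norm_inv, ← norm_smul, ← fderiv_const_mul hdiff]
        rfl
    _ ≤ (c * ε)⁻¹ * M := by gcongr
    _ = M / c / ε := by rw [mul_inv, div_div, div_eq_inv_mul, mul_inv]

theorem exists_eventually_le_norm_fderiv_shellPotential (hr : 0 < r) (hφ : ContDiffAt ℝ 1 φ r)
    (hφ' : deriv φ r ≠ 0) (hQ : ∀ x ∈ sphere (0 : E) r, ContDiffAt ℝ 1 Q x)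
    (hQne : ∃ x, ‖x‖ = r ∧ Q x ≠ 0) :
    ∃ c > 0, ∀ᶠ ε in 𝓝[>] (0 : ℝ), ∃ x : E, (r < ‖x‖ ∧ ‖x‖ < r + ε) ∧
      c / ε ≤ ‖fderiv ℝ (shellPotential φ r Q ε) x‖ := by
  obtain ⟨C, hC⟩ := exists_eventually_norm_fderiv_shellPotential_le hr hφ hφ' hQ
  obtain ⟨c, hc, hcφ⟩ := exists_eventually_mul_le_norm_sub hφ'
  obtain ⟨v, hv, hQv⟩ : ∃ v : E, ‖v‖ = 1 ∧ Q (r • v) ≠ 0 := by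
    obtain ⟨y, hy, hQy⟩ := hQne
    refine ⟨r⁻¹ • y, ?_, by rwa [smul_inv_smul₀ hr.ne']⟩
    rw [norm_smul, norm_inv, Real.norm_of_nonneg hr.le, hy, inv_mul_cancel₀ hr.ne']
  have hnorm : ∀ t : ℝ, 0 ≤ t → ‖t • v‖ = t := fun t ht => by
    rw [norm_smul, hv, mul_one, Real.norm_of_nonneg ht]
  have hQc : ContinuousAt Q (r • v) :=
    (hQ _ (mem_sphere_zero_iff_norm.2 (hnorm r hr.le))).continuousAt
  refine ⟨|Q (r • v)| / 2, half_pos (abs_pos.2 hQv), ?_⟩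
  filter_upwards [hC, hcφ, self_mem_nhdsWithin,
    (eventually_half_abs_le_abs_add_smul hQc hQv).filter_mono nhdsWithin_le_nhds]
    with ε hCε hcε (hε : 0 < ε) hQε
  have hD : φ (r + ε) - φ r ≠ 0 := norm_pos_iff.1 ((mul_pos hc hε).trans_le hcε)
  have hdiff : ∀ t ∈ Icc r (r + ε), DifferentiableAt ℝ (shellPotential φ r Q ε) (t • v) := by
    intro t ht
    have ht_norm := hnorm t (hr.le.trans ht.1)
    exact (hCε (t • v) (ht.1.trans_eq ht_norm.symm) (ht_norm.trans_le ht.2)).1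
  obtain ⟨t, ⟨hrt, htε⟩, ht⟩ :=
    exists_fderiv_smul_apply_eq_slope (lt_add_of_pos_right r hε) hdiff
  rw [shellPotential_of_norm_eq_inner (hnorm r hr.le),
    shellPotential_of_norm_eq_outer hD (hnorm (r + ε) (by positivity)), sub_zero,
    add_sub_cancel_left] at ht
  refine ⟨t • v, by simpa [hnorm t (hr.trans hrt).le] using And.intro hrt htε, ?_⟩
  calc |Q (r • v)| / 2 / ε ≤ |Q ((r + ε) • v)| / ε := by gcongr
    _ = ‖fderiv ℝ (shellPotential φ r Q ε) (t • v) v‖ := by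
      rw [ht, Real.norm_eq_abs, abs_div, abs_of_pos hε]
    _ ≤ ‖fderiv ℝ (shellPotential φ r Q ε) (t • v)‖ := by
      simpa [hv] using (fderiv ℝ (shellPotential φ r Q ε) (t • v)).le_opNorm v

theorem perfect_gradient_blowup_rate_general (hr : 0 < r) (hφ : ContDiffAt ℝ 1 φ r)
    (hφ' : deriv φ r ≠ 0) (hQ : ∀ x ∈ sphere (0 : E) r, ContDiffAt ℝ 1 Q x)
    (hQne : ∃ x, ‖x‖ = r ∧ Q x ≠ 0) :
    let A : ℝ → ℝ := fun ε => 1 / (φ (r + ε) - φ r)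
    let B : ℝ → ℝ := fun ε => -φ r * A ε
    let u : ℝ → E → ℝ := fun ε x => A ε * φ ‖x‖ * Q x + B ε * Q x
    ∃ ε₀ : ℝ, 0 < ε₀ ∧ ∃ c₁ c₂ : ℝ, 0 < c₁ ∧ c₁ ≤ c₂ ∧
      ∀ ε ∈ Ioo (0 : ℝ) ε₀,
        c₁ / ε ≤ sSup ((fun x => ‖gradient (u ε) x‖) '' {x | r < ‖x‖ ∧ ‖x‖ < r + ε}) ∧
        sSup ((fun x => ‖gradient (u ε) x‖) '' {x | r < ‖x‖ ∧ ‖x‖ < r + ε}) ≤ c₂ / ε := by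
  intro A B u
  have hu : u = shellPotential φ r Q := by
    funext ε x
    simp only [u, B, A, shellPotential]
    ring
  obtain ⟨C, hC⟩ := exists_eventually_norm_fderiv_shellPotential_le hr hφ hφ' hQ
  obtain ⟨c, hc, hcu⟩ := exists_eventually_le_norm_fderiv_shellPotential hr hφ hφ' hQ hQne
  obtain ⟨ε₀, hε₀, hbounds⟩ := mem_nhdsGT_iff_exists_Ioo_subset.1 (hC.and hcu)
  refine ⟨ε₀, hε₀, c, max c C, hc, le_max_left c C, fun ε hε => ?_⟩
  obtain ⟨hupper, x, hx, hlower⟩ := hbounds hε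
  simp only [hu, norm_gradient]
  have hle : ∀ y ∈ (fun x => ‖fderiv ℝ (shellPotential φ r Q ε) x‖) ''
      {x | r < ‖x‖ ∧ ‖x‖ < r + ε}, y ≤ max c C / ε := by
    rintro _ ⟨z, hz, rfl⟩
    exact (hupper z hz.1.le hz.2.le).2.trans
      (div_le_div_of_nonneg_right (le_max_right c C) hε.1.le)
  exact ⟨le_csSup_of_le ⟨_, hle⟩ (mem_image_of_mem _ hx) hlower,
    csSup_le ⟨_, mem_image_of_mem _ hx⟩ hle⟩

end ShellPotential

theorem eval_smul_of_isHomogeneous {σ R : Type*} [CommSemiring R] {P : MvPolynomial σ R} {k : ℕ}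
    (hP : P.IsHomogeneous k) (t : R) (x : σ → R) :
    MvPolynomial.eval (t • x) P = t ^ k * MvPolynomial.eval x P := by
  simp only [MvPolynomial.eval_eq, Finset.mul_sum]
  refine Finset.sum_congr rfl fun m hm => ?_
  simp only [Pi.smul_apply, smul_eq_mul, mul_pow, Finset.prod_mul_distrib,
    Finset.prod_pow_eq_pow_sum, ← hP.degree_eq_sum_deg_support hm]
  ring

namespace IsSolidHarmonic

variable {d k : ℕ} {Q : EuclideanSpace ℝ (Fin d) → ℝ}

theorem contDiff (hQ : IsSolidHarmonic k Q) {n : WithTop ℕ∞} : ContDiff ℝ n Q := by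
  obtain ⟨⟨P, -, hQP⟩, -⟩ := hQ
  rw [funext hQP]
  exact ((AnalyticOnNhd.eval_mvPolynomial P).contDiff).comp (PiLp.contDiff_ofLp)

theorem map_smul (hQ : IsSolidHarmonic k Q) (t : ℝ) (x : EuclideanSpace ℝ (Fin d)) :
    Q (t • x) = t ^ k * Q x := by
  obtain ⟨⟨P, hP, hQP⟩, -⟩ := hQ
  rw [hQP, hQP]
  exact eval_smul_of_isHomogeneous hP t x

end IsSolidHarmonic

theorem deriv_rpow_const_ne_zero {r s : ℝ} (hr : 0 < r) (hs : s ≠ 0) :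
    deriv (fun t : ℝ => t ^ s) r ≠ 0 := by
  rw [Real.deriv_rpow_const]
  exact mul_ne_zero hs (Real.rpow_pos_of_pos hr _).ne'

theorem two_sub_sub_two_mul_neg {d k : ℕ} (h : 2 < d + 2 * k) : (2 : ℝ) - d - 2 * k < 0 := by
  have h' : (2 : ℝ) < d + 2 * k := by exact_mod_cast h
  linarith

theorem perfect_gradient_blowup_rate {d k : ℕ} (hd : 2 ≤ d) (hk : 1 ≤ k)
    {r₀ : ℝ} (hr₀ : 0 < r₀)
    (Q : EuclideanSpace ℝ (Fin d) → ℝ) (hQ : IsSolidHarmonic k Q) (hQne : Q ≠ 0) :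
    let A : ℝ → ℝ := fun ε => 1 / ((r₀ + ε) ^ ((2 : ℝ) - (d : ℝ) - 2 * (k : ℝ))
      - r₀ ^ ((2 : ℝ) - (d : ℝ) - 2 * (k : ℝ)))
    let B : ℝ → ℝ := fun ε => -(r₀ ^ ((2 : ℝ) - (d : ℝ) - 2 * (k : ℝ))) * A ε
    let u : ℝ → EuclideanSpace ℝ (Fin d) → ℝ := fun ε x =>
      A ε * ‖x‖ ^ ((2 : ℝ) - (d : ℝ) - 2 * (k : ℝ)) * Q x + B ε * Q x
    ∃ ε₀ : ℝ, 0 < ε₀ ∧ ∃ c₁ c₂ : ℝ, 0 < c₁ ∧ c₁ ≤ c₂ ∧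
      ∀ ε ∈ Set.Ioo (0 : ℝ) ε₀,
        c₁ / ε ≤ sSup ((fun x => ‖gradient (u ε) x‖) '' {x | r₀ < ‖x‖ ∧ ‖x‖ < r₀ + ε}) ∧
        sSup ((fun x => ‖gradient (u ε) x‖) '' {x | r₀ < ‖x‖ ∧ ‖x‖ < r₀ + ε}) ≤ c₂ / ε := by
  exact perfect_gradient_blowup_rate_general (φ := fun t => t ^ ((2 : ℝ) - d - 2 * k)) hr₀
    (Real.contDiffAt_rpow_const_of_ne hr₀.ne')
    (deriv_rpow_const_ne_zero hr₀ (two_sub_sub_two_mul_neg (by lia)).ne)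
    (fun _ _ => hQ.contDiff.contDiffAt)
    (exists_norm_eq_and_ne_zero_of_map_smul (Nat.one_le_iff_ne_zero.1 hk) hQ.map_smul hQne hr₀)
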